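/- arXiv:0706.2141 — 6 statements merged into one kernel-verified Lean document; each statement's English description precedes it below -/
import Mathlib

section
/- Let d ≥ 1 and let ρ̂ be a positive definite d×d complex density matrix with smallest eigenvalue λ > 0. Set β := d/λ and let T : M_d → M_d be the linear map T(b) = Tr(ρ̂·b)·I. Then the map b ↦ β·T(b) − b is completely positive: for every k ≥ 1 and every positive semidefinite matrix X on ℂ^k ⊗ ℂ^d, the matrix (id_{M_k} ⊗ (β·T − id))(X) is positive semidefinite. -/
open Matrix
open scoped ComplexOrder

/-- The tensor extension `id_{M_k} ⊗ Ψ` of a map `Ψ : M_d → M_d`, acting blockwise on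
matrices indexed by `Fin k × Fin d`. -/
def idTensor {k d : ℕ} (Ψ : Matrix (Fin d) (Fin d) ℂ → Matrix (Fin d) (Fin d) ℂ)
    (X : Matrix (Fin k × Fin d) (Fin k × Fin d) ℂ) :
    Matrix (Fin k × Fin d) (Fin k × Fin d) ℂ :=
  Matrix.of fun p q => Ψ (Matrix.of fun a b => X (p.1, a) (q.1, b)) p.2 q.2

theorem single_sum {m n ι α : Type*} [DecidableEq m] [DecidableEq n] [AddCommMonoid α]
    (s : Finset ι) (f : ι → α) (i : m) (j : n) :
    single i j (∑ c ∈ s, f c) = ∑ c ∈ s, single i j (f c) :=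
  map_sum (singleAddMonoidHom i j) f s

theorem idTensor_conj_posSemidef {k d : ℕ} (V : Matrix (Fin d) (Fin d) ℂ)
    {X : Matrix (Fin k × Fin d) (Fin k × Fin d) ℂ} (hX : X.PosSemidef) :
    (idTensor (fun b => V * b * Vᴴ) X).PosSemidef := by
  have h := hX.mul_mul_conjTranspose_same (kroneckerMap (· * ·) (1 : Matrix (Fin k) (Fin k) ℂ) V)
  convert h using 1
  ext ⟨i, a⟩ ⟨j, b⟩
  simp [idTensor, mul_apply, Fintype.sum_prod_type, one_apply, kroneckerMap_apply,
    Finset.sum_ite_irrel, apply_ite (star : ℂ → ℂ)]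

theorem idTensor_sum_posSemidef {ι : Type*} {k d : ℕ} (s : Finset ι)
    {Ψ : ι → Matrix (Fin d) (Fin d) ℂ → Matrix (Fin d) (Fin d) ℂ}
    {X : Matrix (Fin k × Fin d) (Fin k × Fin d) ℂ}
    (h : ∀ i ∈ s, (idTensor (Ψ i) X).PosSemidef) :
    (idTensor (fun b => ∑ i ∈ s, Ψ i b) X).PosSemidef := by
  have h' := posSemidef_sum s h
  convert h' using 1
  ext p q
  simp [idTensor, Matrix.sum_apply]

theorem idTensor_add_posSemidef {k d : ℕ}
    {Φ Ψ : Matrix (Fin d) (Fin d) ℂ → Matrix (Fin d) (Fin d) ℂ}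
    {X : Matrix (Fin k × Fin d) (Fin k × Fin d) ℂ}
    (hΦ : (idTensor Φ X).PosSemidef) (hΨ : (idTensor Ψ X).PosSemidef) :
    (idTensor (fun b => Φ b + Ψ b) X).PosSemidef :=
  hΦ.add hΨ

theorem idTensor_smul_posSemidef {k d : ℕ} {c : ℝ} (hc : 0 ≤ c)
    {Ψ : Matrix (Fin d) (Fin d) ℂ → Matrix (Fin d) (Fin d) ℂ}
    {X : Matrix (Fin k × Fin d) (Fin k × Fin d) ℂ} (h : (idTensor Ψ X).PosSemidef) :
    (idTensor (fun b => (c : ℂ) • Ψ b) X).PosSemidef :=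
  h.smul (Complex.zero_le_real.2 hc)

open scoped MatrixOrder in
theorem idTensor_trace_mul_posSemidef {k d : ℕ} {σ : Matrix (Fin d) (Fin d) ℂ}
    (hσ : σ.PosSemidef) {X : Matrix (Fin k × Fin d) (Fin k × Fin d) ℂ} (hX : X.PosSemidef) :
    (idTensor (fun b => (σ * b).trace • (1 : Matrix (Fin d) (Fin d) ℂ)) X).PosSemidef := by
  obtain ⟨B, rfl⟩ := CStarAlgebra.nonneg_iff_eq_star_mul_self.mp hσ.nonneg
  rw [star_eq_conjTranspose]
  have hsum : (fun b : Matrix (Fin d) (Fin d) ℂ => (Bᴴ * B * b).trace • (1 : Matrix _ _ ℂ)) =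
      fun b => ∑ x, ∑ c, (single x c 1 * B) * b * (single x c 1 * B)ᴴ := by
    funext b
    have h : ∀ x c, (single x c 1 * B) * b * (single x c 1 * B)ᴴ =
        single x x ((B * b * Bᴴ) c c) := by
      intro x c
      rw [conjTranspose_mul, conjTranspose_single]
      simpa [Matrix.mul_assoc] using single_mul_mul_single x c c x (1 : ℂ) (B * b * Bᴴ) 1
    have ht : (Bᴴ * B * b).trace = ∑ c, (B * b * Bᴴ) c c := by
      rw [Matrix.mul_assoc, trace_mul_comm]
      rfl
    simp only [h, ht, ← single_sum, sum_single_eq_diagonal, smul_one_eq_diagonal]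
  rw [hsum]
  exact idTensor_sum_posSemidef _ fun x _ => idTensor_sum_posSemidef _ fun c _ =>
    idTensor_conj_posSemidef _ hX

/-- The map `b ↦ d • Tr(b) • 1 - b` is completely positive: its Kraus operators are the matrix
units off the diagonal and the differences of diagonal matrix units. -/
theorem idTensor_card_trace_sub_id_posSemidef {k d : ℕ}
    {X : Matrix (Fin k × Fin d) (Fin k × Fin d) ℂ} (hX : X.PosSemidef) :
    (idTensor (fun b => (d : ℂ) • (b.trace • (1 : Matrix (Fin d) (Fin d) ℂ)) - b) X).PosSemidef := by
  let E (x c : Fin d) : Matrix (Fin d) (Fin d) ℂ := single x c 1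
  let F (x c : Fin d) : Matrix (Fin d) (Fin d) ℂ := E x x - E c c
  have hsum : (fun b : Matrix (Fin d) (Fin d) ℂ => (d : ℂ) • (b.trace • (1 : Matrix _ _ ℂ)) - b) =
      fun b => ((d : ℝ) : ℂ) • (∑ x, ∑ c ∈ Finset.univ.erase x, E x c * b * (E x c)ᴴ) +
        ((1 / 2 : ℝ) : ℂ) • ∑ x, ∑ c, F x c * b * (F x c)ᴴ := by
    funext b
    have hE : ∀ x c, E x c * b * (E x c)ᴴ = single x x (b c c) := by
      intro x c
      simp [E, conjTranspose_single, single_mul_mul_single]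
    have hF : ∀ x c, F x c * b * (F x c)ᴴ = single x x (b x x) + single c c (b c c)
        - single x c (b x c) - single c x (b c x) := by
      intro x c
      simp only [F, E, conjTranspose_sub, conjTranspose_single, sub_mul, mul_sub,
        single_mul_mul_single, star_one, one_mul, mul_one]
      abel
    have hswap : ∑ x, ∑ c, single c x (b c x) = b := by
      rw [Finset.sum_comm]
      exact (matrix_eq_sum_single b).symm
    have htr : ∑ x, ∑ c, single x x (b c c) = b.trace • (1 : Matrix (Fin d) (Fin d) ℂ) := by
      simp only [← single_sum, sum_single_eq_diagonal, smul_one_eq_diagonal]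
      rfl
    simp only [hE, hF, Finset.sum_erase_eq_sub (Finset.mem_univ _), Finset.sum_sub_distrib,
      Finset.sum_add_distrib, hswap, htr, ← matrix_eq_sum_single b, Finset.sum_const,
      ← Finset.smul_sum, sum_single_eq_diagonal, Finset.card_univ, Fintype.card_fin]
    rw [← Nat.cast_smul_eq_nsmul ℂ]
    push_cast
    module
  rw [hsum]
  refine idTensor_add_posSemidef
    (idTensor_smul_posSemidef (by positivity) ?_) (idTensor_smul_posSemidef (by positivity) ?_) <;>
  exact idTensor_sum_posSemidef _ fun x _ => idTensor_sum_posSemidef _ fun c _ =>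
    idTensor_conj_posSemidef _ hX

theorem posSemidef_sub_smul_one_of_le_eigenvalues {n : Type*} [Fintype n] [DecidableEq n]
    {A : Matrix n n ℂ} (hA : A.IsHermitian) {c : ℝ} (h : ∀ i, c ≤ hA.eigenvalues i) :
    (A - (c : ℂ) • (1 : Matrix n n ℂ)).PosSemidef := by
  have hdiag : (diagonal fun i => ((hA.eigenvalues i - c : ℝ) : ℂ)).PosSemidef :=
    PosSemidef.diagonal fun i => Complex.zero_le_real.2 (sub_nonneg.2 (h i))
  have h' := hdiag.mul_mul_conjTranspose_same (hA.eigenvectorUnitary : Matrix n n ℂ)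
  convert h' using 1
  have hsplit : (diagonal fun i => ((hA.eigenvalues i - c : ℝ) : ℂ)) =
      diagonal (RCLike.ofReal ∘ hA.eigenvalues) - (c : ℂ) • (1 : Matrix n n ℂ) := by
    ext i j
    by_cases hij : i = j <;> simp [hij]
  have hU : (hA.eigenvectorUnitary : Matrix n n ℂ) * (hA.eigenvectorUnitary : Matrix n n ℂ)ᴴ = 1 :=
    Unitary.coe_mul_star_self hA.eigenvectorUnitary
  rw [hsplit, mul_sub, sub_mul, Matrix.mul_smul, smul_mul, mul_one, hU]
  congr 1
  exact hA.spectral_theorem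

/-- Let `ρ` be a positive definite `d × d` density matrix with smallest
eigenvalue `lam > 0`, let `β = d / lam` and `T(b) = Tr(ρ b) • 1`.  Then `β • T - id` is
completely positive: for every `k ≥ 1`, `id_{M_k} ⊗ (β • T - id)` maps positive
semidefinite matrices to positive semidefinite matrices. -/
theorem cp_of_beta_smul_trace_map_sub_id
    (d : ℕ) (hd : 1 ≤ d)
    (ρ : Matrix (Fin d) (Fin d) ℂ) (hρ : ρ.PosDef) (hρtr : ρ.trace = 1)
    (lam : ℝ) (hlam : 0 < lam)
    (hlow : ∀ i, lam ≤ hρ.1.eigenvalues i)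
    (hmem : ∃ i, hρ.1.eigenvalues i = lam)
    (k : ℕ) (hk : 1 ≤ k)
    (X : Matrix (Fin k × Fin d) (Fin k × Fin d) ℂ) (hX : X.PosSemidef) :
    (idTensor (fun b => (((d : ℝ) / lam : ℝ) : ℂ) • ((ρ * b).trace • (1 : Matrix (Fin d) (Fin d) ℂ)) - b) X).PosSemidef := by
  have hσ := posSemidef_sub_smul_one_of_le_eigenvalues hρ.1 hlow
  have hsum : (fun b : Matrix (Fin d) (Fin d) ℂ => (((d : ℝ) / lam : ℝ) : ℂ) •
        ((ρ * b).trace • (1 : Matrix (Fin d) (Fin d) ℂ)) - b) =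
      fun b => (((d : ℝ) / lam : ℝ) : ℂ) • (((ρ - (lam : ℂ) • 1) * b).trace • (1 : Matrix _ _ ℂ)) +
        ((d : ℂ) • (b.trace • (1 : Matrix (Fin d) (Fin d) ℂ)) - b) := by
    funext b
    have hlam' : (lam : ℂ) ≠ 0 := by exact_mod_cast hlam.ne'
    rw [← add_sub_assoc]
    congr 1
    simp only [sub_mul, smul_mul, one_mul, trace_sub, trace_smul, smul_smul, ← add_smul]
    congr 1
    push_cast
    field_simp
    simp
  rw [hsum]
  exact idTensor_add_posSemidef
    (idTensor_smul_posSemidef (by positivity) (idTensor_trace_mul_posSemidef hσ hX))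
    (idTensor_card_trace_sub_id_posSemidef hX)
end

section
/- Let E : M_d ⊗ M_b → M_b be a unital completely positive linear map and ρ̂ a positive definite b×b density matrix such that Tr_{M_d}(E*(ρ̂)) = ρ̂, where E* is the Hilbert–Schmidt adjoint of E. Define φ̂_1 := E*(ρ̂) ∈ M_d ⊗ M_b and recursively φ̂_n := (id_{M_d^{⊗(n−1)}} ⊗ E*)(φ̂_{n−1}) ∈ M_d^{⊗n} ⊗ M_b, and set ω̂_n := Tr_{M_b}(φ̂_n). Then each ω̂_n is a density matrix on (ℂ^d)^{⊗n}, and there exists β ≥ 1 (one may take β = b divided by the smallest eigenvalue of ρ̂) such that ω̂_n ≤ β·(ω̂_k ⊗ ω̂_{n−k}) in the Loewner order for every n and every 0 < k < n. -/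
open Matrix
open scoped ComplexOrder

/-- The Kronecker product of a matrix on `(ℂ^d)^{⊗k}` and a matrix on `(ℂ^d)^{⊗(n-k)}`,
viewed as a matrix on `(ℂ^d)^{⊗n}` via the canonical identification of `Fin n` with
`Fin k ⊕ Fin (n-k)`. -/
def tkron {d n k : ℕ} (h : k ≤ n)
    (M : Matrix (Fin k → Fin d) (Fin k → Fin d) ℂ)
    (N : Matrix (Fin (n - k) → Fin d) (Fin (n - k) → Fin d) ℂ) :
    Matrix (Fin n → Fin d) (Fin n → Fin d) ℂ :=
  Matrix.of fun x y =>
    M (fun i => x ⟨i.1, lt_of_lt_of_le i.2 h⟩) (fun i => y ⟨i.1, lt_of_lt_of_le i.2 h⟩) *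
      N (fun j => x ⟨k + j.1, by have := j.2; omega⟩)
        (fun j => y ⟨k + j.1, by have := j.2; omega⟩)

/-- Complete positivity of a map `E : M_d ⊗ M_b → M_b`: for every `k ≥ 1`, the blockwise
extension `id_{M_k} ⊗ E` preserves positive semidefiniteness. -/
def IsCPmap (d b : ℕ)
    (E : Matrix (Fin d × Fin b) (Fin d × Fin b) ℂ →ₗ[ℂ] Matrix (Fin b) (Fin b) ℂ) :
    Prop :=
  ∀ (k : ℕ), 1 ≤ k →
    ∀ X : Matrix (Fin k × (Fin d × Fin b)) (Fin k × (Fin d × Fin b)) ℂ, X.PosSemidef →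
      (Matrix.of fun p q : Fin k × Fin b =>
        E (Matrix.of fun u v : Fin d × Fin b => X (p.1, u) (q.1, v)) p.2 q.2).PosSemidef

/-- The recursively defined states `φ̂_n = (id^{⊗(n-1)} ⊗ E*) ∘ ⋯ ∘ (id ⊗ E*) ∘ E* (ρ̂)`
on `M_d^{⊗n} ⊗ M_b` (with `φ̂_0 = ρ̂`); the newly created `M_d` factor at each step is the
last tensor factor. -/
noncomputable def fcPhi {d b : ℕ}
    (Estar : Matrix (Fin b) (Fin b) ℂ →ₗ[ℂ] Matrix (Fin d × Fin b) (Fin d × Fin b) ℂ)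
    (ρ : Matrix (Fin b) (Fin b) ℂ) :
    (n : ℕ) → Matrix ((Fin n → Fin d) × Fin b) ((Fin n → Fin d) × Fin b) ℂ
  | 0 => Matrix.of fun p q => ρ p.2 q.2
  | n + 1 => Matrix.of fun p q =>
      Estar (Matrix.of fun i j => fcPhi Estar ρ n (Fin.init p.1, i) (Fin.init q.1, j))
        (p.1 (Fin.last n), p.2) (q.1 (Fin.last n), q.2)

/-- The local density matrices `ω̂_n = Tr_{M_b} φ̂_n` of the finitely correlated state. -/
noncomputable def fcOmega {d b : ℕ}
    (Estar : Matrix (Fin b) (Fin b) ℂ →ₗ[ℂ] Matrix (Fin d × Fin b) (Fin d × Fin b) ℂ)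
    (ρ : Matrix (Fin b) (Fin b) ℂ) (n : ℕ) :
    Matrix (Fin n → Fin d) (Fin n → Fin d) ℂ :=
  Matrix.of fun x y => ∑ i : Fin b, fcPhi Estar ρ n (x, i) (y, i)

open scoped Kronecker MatrixOrder

section PosSemidef

variable {m n : Type*}

/-- Over `ℂ`, nonnegativity of the quadratic form alone gives positive semidefiniteness. -/
lemma posSemidef_of_dotProduct_nonneg [Fintype n] {M : Matrix n n ℂ}
    (h : ∀ v : n → ℂ, 0 ≤ star v ⬝ᵥ (M *ᵥ v)) : M.PosSemidef := by
  classical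
  rw [← Matrix.isPositive_toEuclideanLin_iff, LinearMap.isPositive_iff_complex]
  intro v
  have hv := h v.ofLp
  have key : inner ℂ (M.toEuclideanLin v) v = star (star v.ofLp ⬝ᵥ (M *ᵥ v.ofLp)) := by
    rw [← inner_conj_symm, EuclideanSpace.inner_eq_star_dotProduct, dotProduct_comm]
    rfl
  rw [key, (IsSelfAdjoint.of_nonneg hv).star_eq]
  obtain ⟨hre, him⟩ := Complex.nonneg_iff.mp hv
  exact ⟨Complex.ext rfl him, hre⟩

lemma Matrix.PosSemidef.trace_mul_nonneg [Fintype n] {A B : Matrix n n ℂ}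
    (hA : A.PosSemidef) (hB : B.PosSemidef) : 0 ≤ (A * B).trace := by
  classical
  obtain ⟨C, rfl⟩ := CStarAlgebra.nonneg_iff_eq_star_mul_self.mp hB.nonneg
  rw [Matrix.star_eq_conjTranspose, ← Matrix.mul_assoc, Matrix.trace_mul_comm, ← Matrix.mul_assoc]
  exact (hA.mul_mul_conjTranspose_same C).trace_nonneg

lemma Matrix.PosSemidef.diagonal_congruence [Finite n] {A : Matrix n n ℂ} (hA : A.PosSemidef)
    (c : n → ℂ) : (Matrix.of fun p q => c p * A p q * star (c q)).PosSemidef := by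
  classical
  have := Fintype.ofFinite n
  convert hA.mul_mul_conjTranspose_same (Matrix.diagonal c) using 1
  ext p q
  simp [Matrix.diagonal_conjTranspose]

/-- The partial trace over the second tensor factor. -/
def partialTraceRight [Fintype n] (X : Matrix (m × n) (m × n) ℂ) : Matrix m m ℂ :=
  Matrix.of fun s t => ∑ i, X (s, i) (t, i)

lemma Matrix.PosSemidef.partialTraceRight [Fintype n] {X : Matrix (m × n) (m × n) ℂ}
    (hX : X.PosSemidef) : (partialTraceRight X).PosSemidef := by
  have h : _root_.partialTraceRight X =
      ∑ i : n, X.submatrix (fun s => (s, i)) (fun s => (s, i)) := by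
    ext s t
    simp [_root_.partialTraceRight, Matrix.sum_apply]
  rw [h]
  exact Matrix.posSemidef_sum _ fun i _ => hX.submatrix _

/-- The pinching inequality: a positive semidefinite `X` is bounded by `|n|` times its block
diagonal part. -/
lemma Matrix.PosSemidef.pinching [Finite m] [Fintype n] [DecidableEq n]
    {X : Matrix (m × n) (m × n) ℂ} (hX : X.PosSemidef) :
    ((Matrix.of fun p q => if p.2 = q.2 then (Fintype.card n : ℂ) * X p q else 0)
      - X).PosSemidef := by
  have h := Matrix.posSemidef_sum (R := ℂ) Finset.univ fun (k : n × n) _ =>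
    hX.diagonal_congruence
      (fun p => (if p.2 = k.1 then 1 else 0) - (if p.2 = k.2 then 1 else 0))
  have h2 := h.smul (show (0 : ℝ) ≤ 1 / 2 by norm_num)
  convert h2 using 1
  ext ⟨s, i⟩ ⟨t, j⟩
  simp only [Matrix.sub_apply, Matrix.of_apply, Matrix.smul_apply, Matrix.sum_apply,
    Fintype.sum_prod_type, star_sub, apply_ite star, star_one, star_zero, sub_mul, mul_sub,
    Finset.sum_sub_distrib]
  simp
  ring

/-- A positive semidefinite `X` on `m × n` satisfies `X ≤ |n| • (Tr_n X ⊗ 1)`. -/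
lemma Matrix.PosSemidef.card_smul_partialTraceRight_sub [Finite m] [Fintype n] [DecidableEq n]
    {X : Matrix (m × n) (m × n) ℂ} (hX : X.PosSemidef) :
    ((Fintype.card n : ℝ) • (_root_.partialTraceRight X ⊗ₖ (1 : Matrix n n ℂ)) - X).PosSemidef := by
  have h := Matrix.posSemidef_sum (R := ℂ) (Finset.univ.filter fun k : n × n => k.1 ≠ k.2)
    fun k _ => (hX.submatrix fun p : m × n => (p.1, k.1)).diagonal_congruence
      (fun p => if p.2 = k.2 then 1 else 0)
  convert hX.pinching.add (h.smul (show (0 : ℝ) ≤ Fintype.card n by positivity)) using 1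
  ext ⟨s, i⟩ ⟨t, j⟩
  simp only [Matrix.sub_apply, Matrix.add_apply, Matrix.smul_apply, Matrix.sum_apply,
    Matrix.of_apply, Matrix.submatrix_apply, Matrix.kroneckerMap_apply, Matrix.one_apply,
    _root_.partialTraceRight]
  simp only [Finset.sum_filter, Fintype.sum_prod_type]
  by_cases hij : i = j
  · subst hij
    have hsum (x : n) : (∑ c, if x ≠ c then (if i = c then (1 : ℂ) else 0) * X (s, x) (t, x) *
        star (if i = c then (1 : ℂ) else 0) else 0) =
        X (s, x) (t, x) - if x = i then X (s, x) (t, x) else 0 := by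
      rw [Finset.sum_eq_single i (by intro c _ hc; simp [hc.symm]) (by simp)]
      by_cases hx : x = i <;> simp [hx]
    simp only [hsum, Finset.sum_sub_distrib]
    simp
    ring
  · have hsum (x c : n) : (if x ≠ c then (if i = c then (1 : ℂ) else 0) * X (s, x) (t, x) *
        star (if j = c then (1 : ℂ) else 0) else 0) = 0 := by
      by_cases hi : i = c
      · simp [← hi, Ne.symm hij]
      · simp [hi]
    simp only [hsum]
    simp [hij]

lemma Matrix.PosDef.exists_sub_smul_one_posSemidef [Fintype n] [DecidableEq n] [Nonempty n]
    {A : Matrix n n ℂ} (hA : A.PosDef) :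
    ∃ ε : ℝ, 0 < ε ∧ ε ≤ 1 ∧ (A - ε • (1 : Matrix n n ℂ)).PosSemidef := by
  obtain ⟨i, hi⟩ := Finite.exists_min hA.1.eigenvalues
  refine ⟨min (hA.1.eigenvalues i) 1, lt_min (hA.eigenvalues_pos i) one_pos, min_le_right _ _, ?_⟩
  set ε := min (hA.1.eigenvalues i) 1
  have h : A - ε • (1 : Matrix n n ℂ) = Unitary.conjStarAlgAut ℂ _ hA.1.eigenvectorUnitary
      (Matrix.diagonal fun j => ((hA.1.eigenvalues j - ε : ℝ) : ℂ)) := by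
    have hd : (Matrix.diagonal fun j => ((hA.1.eigenvalues j - ε : ℝ) : ℂ)) =
        Matrix.diagonal (RCLike.ofReal ∘ hA.1.eigenvalues) - (ε : ℂ) • (1 : Matrix n n ℂ) := by
      ext p q
      by_cases hpq : p = q <;> simp [hpq]
    rw [hd, map_sub, ← hA.1.spectral_theorem, map_smul, map_one]
    rfl
  rw [h, Unitary.conjStarAlgAut_apply]
  refine (Matrix.PosSemidef.diagonal fun j => ?_).mul_mul_conjTranspose_same _
  have hj : ε ≤ hA.1.eigenvalues j := (min_le_left _ _).trans (hi j)
  simpa using hj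

end PosSemidef

section Amplification

variable {ι κ α β : Type*}

/-- The ampliation `id ⊗ L` of a linear map between matrix algebras, acting blockwise. -/
def ampliation (L : Matrix α α ℂ →ₗ[ℂ] Matrix β β ℂ) (X : Matrix (ι × α) (ι × α) ℂ) :
    Matrix (ι × β) (ι × β) ℂ :=
  Matrix.of fun p q => L (Matrix.of fun u v => X (p.1, u) (q.1, v)) p.2 q.2

lemma ampliation_sub (L : Matrix α α ℂ →ₗ[ℂ] Matrix β β ℂ) (X Y : Matrix (ι × α) (ι × α) ℂ) :
    ampliation L (X - Y) = ampliation L X - ampliation L Y := by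
  ext p q
  exact congrFun₂ (map_sub L (Matrix.of fun u v => X (p.1, u) (q.1, v))
    (Matrix.of fun u v => Y (p.1, u) (q.1, v))) p.2 q.2

lemma ampliation_kronecker (L : Matrix α α ℂ →ₗ[ℂ] Matrix β β ℂ) (A : Matrix ι ι ℂ)
    (B : Matrix (κ × α) (κ × α) ℂ) (s t : ι) (x y : κ) (i j : β) :
    ampliation L (Matrix.of fun p q : (ι × κ) × α =>
      A p.1.1 q.1.1 * B (p.1.2, p.2) (q.1.2, q.2)) ((s, x), i) ((t, y), j) =
      A s t * ampliation L B (x, i) (y, j) :=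
  congrFun₂ (map_smul L (A s t) (Matrix.of fun u v => B (x, u) (y, v))) i j

lemma IsCPmap.ampliation_posSemidef {d b : ℕ}
    {E : Matrix (Fin d × Fin b) (Fin d × Fin b) ℂ →ₗ[ℂ] Matrix (Fin b) (Fin b) ℂ}
    (hE : IsCPmap d b E) [Finite ι] {X : Matrix (ι × (Fin d × Fin b)) (ι × (Fin d × Fin b)) ℂ}
    (hX : X.PosSemidef) : (ampliation E X).PosSemidef := by
  have := Fintype.ofFinite ι
  rcases isEmpty_or_nonempty ι with hι | hι
  · rw [Subsingleton.elim (ampliation E X) 0]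
    exact Matrix.PosSemidef.zero
  · let e := Fintype.equivFin ι
    have h := (hE (Fintype.card ι) Fintype.card_pos _
      (hX.submatrix (Prod.map e.symm id))).submatrix (Prod.map e id)
    convert h using 1
    ext p q
    simp [ampliation]

/-- The Hilbert–Schmidt adjoint of a completely positive map is completely positive. -/
lemma ampliation_adjoint_posSemidef [Fintype ι] [Fintype α] [Fintype β]
    {L : Matrix α α ℂ →ₗ[ℂ] Matrix β β ℂ} {Ladj : Matrix β β ℂ →ₗ[ℂ] Matrix α α ℂ}
    (hL : ∀ X : Matrix (ι × α) (ι × α) ℂ, X.PosSemidef → (ampliation L X).PosSemidef)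
    (hadj : ∀ A x, ((L A)ᴴ * x).trace = (Aᴴ * Ladj x).trace)
    {X : Matrix (ι × β) (ι × β) ℂ} (hX : X.PosSemidef) : (ampliation Ladj X).PosSemidef := by
  refine posSemidef_of_dotProduct_nonneg fun v => ?_
  have hZ := hL _ (Matrix.posSemidef_vecMulVec_self_star v)
  have h0 := hZ.conjTranspose.trace_mul_nonneg hX
  convert h0 using 1
  have hblock (s t : ι) := hadj (Matrix.of fun u w => v (s, u) * star (v (t, w)))
    (Matrix.of fun i j => X (s, i) (t, j))
  simp only [Matrix.trace, Matrix.diag, Matrix.mul_apply, Matrix.conjTranspose_apply] at hblock ⊢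
  simp only [dotProduct, Matrix.mulVec, Fintype.sum_prod_type, ampliation, Matrix.of_apply,
    Pi.star_apply, Finset.mul_sum, Matrix.vecMulVec_apply] at hblock ⊢
  calc
    _ = ∑ s, ∑ t, ∑ w, ∑ u, star (v (s, u) * star (v (t, w))) *
        Ladj (Matrix.of fun i j => X (s, i) (t, j)) u w := by
      refine Finset.sum_congr rfl fun s _ => ?_
      rw [Finset.sum_comm]
      refine Finset.sum_congr rfl fun t _ => ?_
      rw [Finset.sum_comm]
      refine Finset.sum_congr rfl fun w _ => Finset.sum_congr rfl fun u _ => ?_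
      rw [star_mul', star_star]
      ring
    _ = _ := by
      simp only [← hblock]
      rw [Finset.sum_comm]
      refine Finset.sum_congr rfl fun t _ => ?_
      rw [Finset.sum_comm]

end Amplification

section FinitelyCorrelated

variable {ι : Type} {d b : ℕ}
  (L : Matrix (Fin b) (Fin b) ℂ →ₗ[ℂ] Matrix (Fin d × Fin b) (Fin d × Fin b) ℂ)

/-- The iteration defining `fcPhi`, started from a matrix carrying an auxiliary tensor factor. -/
def fcPhiFrom (Y : Matrix (ι × Fin b) (ι × Fin b) ℂ) : (m : ℕ) →
    Matrix ((ι × (Fin m → Fin d)) × Fin b) ((ι × (Fin m → Fin d)) × Fin b) ℂ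
  | 0 => Y.submatrix (fun p => (p.1.1, p.2)) (fun p => (p.1.1, p.2))
  | m + 1 => (ampliation L (fcPhiFrom Y m)).submatrix
      (fun p => ((p.1.1, Fin.init p.1.2), (p.1.2 (Fin.last m), p.2)))
      (fun p => ((p.1.1, Fin.init p.1.2), (p.1.2 (Fin.last m), p.2)))

lemma fcPhi_succ (ρ : Matrix (Fin b) (Fin b) ℂ) (n : ℕ) :
    fcPhi L ρ (n + 1) = (ampliation L (fcPhi L ρ n)).submatrix
      (fun p => (Fin.init p.1, (p.1 (Fin.last n), p.2)))
      (fun p => (Fin.init p.1, (p.1 (Fin.last n), p.2))) := rfl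

lemma fcOmega_eq_partialTraceRight (ρ : Matrix (Fin b) (Fin b) ℂ) (n : ℕ) :
    fcOmega L ρ n = partialTraceRight (fcPhi L ρ n) := rfl

lemma fcPhiFrom_sub (Y Z : Matrix (ι × Fin b) (ι × Fin b) ℂ) (m : ℕ) :
    fcPhiFrom L (Y - Z) m = fcPhiFrom L Y m - fcPhiFrom L Z m := by
  induction m with
  | zero => rfl
  | succ m ih => rw [fcPhiFrom, ih, ampliation_sub]; rfl

lemma fcPhiFrom_kronecker (A : Matrix ι ι ℂ) (ρ : Matrix (Fin b) (Fin b) ℂ) (m : ℕ) :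
    fcPhiFrom L (A ⊗ₖ ρ) m = Matrix.of fun p q : (ι × (Fin m → Fin d)) × Fin b =>
      A p.1.1 q.1.1 * fcPhi L ρ m (p.1.2, p.2) (q.1.2, q.2) := by
  induction m with
  | zero => rfl
  | succ m ih =>
    rw [fcPhiFrom, ih]
    ext p q
    exact ampliation_kronecker L A (fcPhi L ρ m) _ _ _ _ _ _

lemma fcPhi_add (ρ : Matrix (Fin b) (Fin b) ℂ) (k m : ℕ) :
    fcPhi L ρ (k + m) = (fcPhiFrom L (fcPhi L ρ k) m).submatrix
      (fun p => ((fun i => p.1 (Fin.castAdd m i), fun j => p.1 (Fin.natAdd k j)), p.2))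
      (fun p => ((fun i => p.1 (Fin.castAdd m i), fun j => p.1 (Fin.natAdd k j)), p.2)) := by
  induction m with
  | zero => rfl
  | succ m ih =>
    change fcPhi L ρ (k + m + 1) = _
    rw [fcPhi_succ, ih]
    rfl

variable {L}

lemma fcPhiFrom_posSemidef [Finite ι]
    (hL : ∀ (κ : Type) [Finite κ] (X : Matrix (κ × Fin b) (κ × Fin b) ℂ),
      X.PosSemidef → (ampliation L X).PosSemidef)
    {Y : Matrix (ι × Fin b) (ι × Fin b) ℂ} (hY : Y.PosSemidef) (m : ℕ) :
    (fcPhiFrom L Y m).PosSemidef := by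
  induction m with
  | zero => exact hY.submatrix _
  | succ m ih => exact (hL _ _ ih).submatrix _

lemma fcPhi_posSemidef
    (hL : ∀ (κ : Type) [Finite κ] (X : Matrix (κ × Fin b) (κ × Fin b) ℂ),
      X.PosSemidef → (ampliation L X).PosSemidef)
    {ρ : Matrix (Fin b) (Fin b) ℂ} (hρ : ρ.PosSemidef) (n : ℕ) :
    (fcPhi L ρ n).PosSemidef := by
  induction n with
  | zero => exact hρ.submatrix Prod.snd
  | succ n ih =>
    rw [fcPhi_succ]
    exact (hL _ _ ih).submatrix _

lemma fcOmega_posSemidef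
    (hL : ∀ (κ : Type) [Finite κ] (X : Matrix (κ × Fin b) (κ × Fin b) ℂ),
      X.PosSemidef → (ampliation L X).PosSemidef)
    {ρ : Matrix (Fin b) (Fin b) ℂ} (hρ : ρ.PosSemidef) (n : ℕ) :
    (fcOmega L ρ n).PosSemidef :=
  (fcPhi_posSemidef hL hρ n).partialTraceRight

lemma fcOmega_trace (hL : ∀ x, (L x).trace = x.trace) (ρ : Matrix (Fin b) (Fin b) ℂ) (n : ℕ) :
    (fcOmega L ρ n).trace = ρ.trace := by
  induction n with
  | zero => simp [fcOmega, fcPhi, Matrix.trace]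
  | succ n ih =>
    rw [← ih]
    simp only [Matrix.trace, Matrix.diag, fcOmega, Matrix.of_apply]
    rw [← (Fin.snocEquiv fun _ : Fin (n + 1) => Fin d).sum_comp, Fintype.sum_prod_type_right]
    refine Finset.sum_congr rfl fun x _ => ?_
    have h := hL (Matrix.of fun i j => fcPhi L ρ n (x, i) (x, j))
    simp only [Matrix.trace, Matrix.diag, Matrix.of_apply, Fintype.sum_prod_type] at h
    rw [← h]
    have hinit (a : Fin d) : Fin.init (Fin.snocEquiv (fun _ : Fin (n + 1) => Fin d) (a, x)) = x :=
      Fin.init_snoc (α := fun _ : Fin (n + 1) => Fin d) a x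
    have hlast (a : Fin d) : Fin.snocEquiv (fun _ : Fin (n + 1) => Fin d) (a, x) (Fin.last n) = a :=
      Fin.snoc_last (α := fun _ : Fin (n + 1) => Fin d) a x
    simp only [fcPhi, Matrix.of_apply, hinit, hlast]

lemma fcOmega_le_tkron
    (hL : ∀ (κ : Type) [Finite κ] (X : Matrix (κ × Fin b) (κ × Fin b) ℂ),
      X.PosSemidef → (ampliation L X).PosSemidef)
    {ρ : Matrix (Fin b) (Fin b) ℂ} {k : ℕ} {β : ℝ}
    (hβ : (β • (fcOmega L ρ k ⊗ₖ ρ) - fcPhi L ρ k).PosSemidef) {n : ℕ} (hkn : k ≤ n) :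
    (β • tkron hkn (fcOmega L ρ k) (fcOmega L ρ (n - k)) - fcOmega L ρ n).PosSemidef := by
  have h := ((fcPhiFrom_posSemidef hL hβ (n - k)).partialTraceRight).submatrix
    (fun x : Fin n → Fin d => (fun i => x ⟨i.1, lt_of_lt_of_le i.2 hkn⟩,
      fun j => x ⟨k + j.1, by have := j.2; omega⟩))
  have homega : ∀ m (hm : k + m = n) (x y : Fin n → Fin d), fcOmega L ρ n x y =
      partialTraceRight (fcPhiFrom L (fcPhi L ρ k) m)
        (fun i => x ⟨i.1, lt_of_lt_of_le i.2 hkn⟩, fun j => x ⟨k + j.1, by have := j.2; omega⟩)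
        (fun i => y ⟨i.1, lt_of_lt_of_le i.2 hkn⟩,
          fun j => y ⟨k + j.1, by have := j.2; omega⟩) := by
    rintro m rfl x y
    rw [fcOmega, fcPhi_add]
    rfl
  convert h using 1
  ext x y
  rw [Matrix.sub_apply, homega (n - k) (by omega), fcPhiFrom_sub, ← Matrix.smul_kronecker,
    fcPhiFrom_kronecker]
  simp [partialTraceRight, tkron, fcOmega, ← Finset.mul_sum, mul_assoc]

end FinitelyCorrelated

/-- The local restrictions `ω̂_n` of a finitely correlated state are
density matrices and satisfy the upper factorization property
`ω̂_n ≤ β·(ω̂_k ⊗ ω̂_{n-k})` for some `β ≥ 1`. -/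
theorem fcs_density_and_upper_factorization
    (d b : ℕ)
    (E : Matrix (Fin d × Fin b) (Fin d × Fin b) ℂ →ₗ[ℂ] Matrix (Fin b) (Fin b) ℂ)
    (hE1 : E 1 = 1) (hECP : IsCPmap d b E)
    (Estar : Matrix (Fin b) (Fin b) ℂ →ₗ[ℂ] Matrix (Fin d × Fin b) (Fin d × Fin b) ℂ)
    (hadj : ∀ (A : Matrix (Fin d × Fin b) (Fin d × Fin b) ℂ) (x : Matrix (Fin b) (Fin b) ℂ),
      ((E A)ᴴ * x).trace = (Aᴴ * Estar x).trace)
    (ρ : Matrix (Fin b) (Fin b) ℂ) (hρ : ρ.PosDef) (hρtr : ρ.trace = 1)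
    (hinv : (Matrix.of fun i j : Fin b => ∑ a : Fin d, Estar ρ (a, i) (a, j)) = ρ) :
    (∀ n, 1 ≤ n →
      (fcOmega Estar ρ n).PosSemidef ∧ (fcOmega Estar ρ n).trace = 1) ∧
    ∃ β : ℝ, 1 ≤ β ∧
      ∀ (n k : ℕ) (_ : 0 < k) (hkn : k < n),
        (β • tkron hkn.le (fcOmega Estar ρ k) (fcOmega Estar ρ (n - k))
            - fcOmega Estar ρ n).PosSemidef := by
  have hL : ∀ (κ : Type) [Finite κ] (X : Matrix (κ × Fin b) (κ × Fin b) ℂ),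
      X.PosSemidef → (ampliation Estar X).PosSemidef := by
    intro κ _ X hX
    have := Fintype.ofFinite κ
    exact ampliation_adjoint_posSemidef (fun Y hY => hECP.ampliation_posSemidef hY) hadj hX
  have htr : ∀ x, (Estar x).trace = x.trace := fun x => by
    simpa [hE1] using (hadj 1 x).symm
  refine ⟨fun n _ => ⟨fcOmega_posSemidef hL hρ.posSemidef n,
    (fcOmega_trace htr ρ n).trans hρtr⟩, ?_⟩
  have hb : b ≠ 0 := by
    rintro rfl
    simp [Matrix.trace] at hρtr
  have : Nonempty (Fin b) := ⟨⟨0, Nat.pos_of_ne_zero hb⟩⟩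
  obtain ⟨ε, hε, hε1, hρε⟩ := hρ.exists_sub_smul_one_posSemidef
  have hb1 : (1 : ℝ) ≤ b := by exact_mod_cast Nat.one_le_iff_ne_zero.mpr hb
  refine ⟨b / ε, (one_le_div hε).mpr (hε1.trans hb1), fun n k _ hkn => ?_⟩
  refine fcOmega_le_tkron hL ?_ hkn.le
  have h1 := (fcPhi_posSemidef hL hρ.posSemidef k).card_smul_partialTraceRight_sub
  have h2 := ((fcOmega_posSemidef hL hρ.posSemidef k).kronecker hρε).smul
    (show 0 ≤ (b : ℝ) / ε by positivity)
  convert h1.add h2 using 1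
  rw [← fcOmega_eq_partialTraceRight, Fintype.card_fin]
  ext p q
  have hε0 : (ε : ℂ) ≠ 0 := by exact_mod_cast hε.ne'
  simp
  field_simp
  ring
end

section
/- Let A, B be positive semidefinite matrices on ℂ^{d₁} ⊗ ℂ^{d₂}, let A₁, B₁ be positive semidefinite on ℂ^{d₁} and A₂, B₂ positive semidefinite on ℂ^{d₂}, and let β ≥ 1. If A ≤ β·(A₁ ⊗ A₂) and B ≤ β·(B₁ ⊗ B₂) in the Loewner order, then for every t ∈ [0,1]: Tr(A^{1−t}·B^{t}) ≤ β·Tr(A₁^{1−t}·B₁^{t})·Tr(A₂^{1−t}·B₂^{t}). -/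
open Matrix Filter
open scoped ComplexOrder Classical

/-- A sequence of states on `(ℂ^d)^{⊗n}` satisfies the *upper factorization property*
with constant `β` if `ω_n ≤ β·(ω_k ⊗ ω_{n-k})` in the Loewner order for all `0 < k < n`. -/
def UpperFact {d : ℕ} (ω : (n : ℕ) → Matrix (Fin n → Fin d) (Fin n → Fin d) ℂ)
    (β : ℝ) : Prop :=
  ∀ (n k : ℕ) (_ : 0 < k) (hkn : k < n),
    (β • tkron hkn.le (ω k) (ω (n - k)) - ω n).PosSemidef

/-- A sequence of states on `(ℂ^d)^{⊗n}` satisfies the *lower factorization property*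
with constant `α` if `ω_n ≥ α·(ω_k ⊗ ω_{n-k})` in the Loewner order for all `0 < k < n`. -/
def LowerFact {d : ℕ} (ω : (n : ℕ) → Matrix (Fin n → Fin d) (Fin n → Fin d) ℂ)
    (α : ℝ) : Prop :=
  ∀ (n k : ℕ) (_ : 0 < k) (hkn : k < n),
    (ω n - α • tkron hkn.le (ω k) (ω (n - k)) ).PosSemidef

/-- The power `A^t` of a positive semidefinite matrix by the functional calculus, with the
convention that `A^0` is the support projection of `A` (and, more generally, the power is
taken only on the support).  Junk value `0` if `A` is not Hermitian. -/
noncomputable def mpow {I : Type*} [Fintype I] [DecidableEq I] (A : Matrix I I ℂ)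
    (t : ℝ) : Matrix I I ℂ :=
  if hA : A.IsHermitian then
    (hA.eigenvectorUnitary : Matrix I I ℂ) *
      Matrix.diagonal (fun i =>
        if hA.eigenvalues i = 0 then (0 : ℂ) else ((hA.eigenvalues i ^ t : ℝ) : ℂ)) *
      star (hA.eigenvectorUnitary : Matrix I I ℂ)
  else 0

/-- The minimal Bayesian error probability (with uniform prior) for discriminating the
states `ω` and `σ` by a binary test `0 ≤ A ≤ I`. -/
noncomputable def Pmin {I : Type*} [Fintype I] [DecidableEq I]
    (ω σ : Matrix I I ℂ) : ℝ :=
  sInf {v : ℝ | ∃ A : Matrix I I ℂ, A.PosSemidef ∧ (1 - A).PosSemidef ∧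
    v = ((1 / 2 : ℂ) * (ω * (1 - A)).trace + (1 / 2 : ℂ) * (σ * A).trace).re}

/-- Extended-real-valued logarithm, with `log x = -∞` for `x ≤ 0`. -/
noncomputable def elog (x : ℝ) : EReal :=
  if x ≤ 0 then ⊥ else ((Real.log x : ℝ) : EReal)

open scoped Kronecker

section Mpow

variable {I J : Type*} [Fintype I] [DecidableEq I] [Fintype J] [DecidableEq J]

/-- The real power, modified to take the value `0` at the base `0` for every exponent. -/
noncomputable def suppPow (t x : ℝ) : ℝ := if x = 0 then 0 else x ^ t

lemma suppPow_of_pos {t : ℝ} (ht : 0 < t) (x : ℝ) : suppPow t x = x ^ t := by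
  unfold suppPow
  split_ifs with h
  · rw [h, Real.zero_rpow ht.ne']
  · rfl

lemma suppPow_nonneg (t : ℝ) {x : ℝ} (hx : 0 ≤ x) : 0 ≤ suppPow t x := by
  unfold suppPow
  split_ifs
  · rfl
  · exact Real.rpow_nonneg hx t

lemma suppPow_mul (t : ℝ) {x y : ℝ} (hx : 0 ≤ x) (hy : 0 ≤ y) :
    suppPow t (x * y) = suppPow t x * suppPow t y := by
  by_cases h : x = 0 <;> by_cases h' : y = 0 <;> simp [suppPow, h, h', Real.mul_rpow hx hy]

lemma continuous_suppPow (x : ℝ) : Continuous fun t => suppPow t x := by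
  unfold suppPow
  split_ifs with h
  · exact continuous_const
  · exact Real.continuous_const_rpow h

lemma mpow_eq {A : Matrix I I ℂ} (hA : A.IsHermitian) (t : ℝ) :
    mpow A t = (hA.eigenvectorUnitary : Matrix I I ℂ) *
      diagonal (fun i => (suppPow t (hA.eigenvalues i) : ℂ)) *
      star (hA.eigenvectorUnitary : Matrix I I ℂ) := by
  rw [mpow, dif_pos hA]
  congr 3
  ext i
  unfold suppPow
  split_ifs <;> simp

lemma eq_eigenvectorUnitary_mul_diagonal_mul_star {A : Matrix I I ℂ} (hA : A.IsHermitian) :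
    A = (hA.eigenvectorUnitary : Matrix I I ℂ) *
      diagonal (fun i => (hA.eigenvalues i : ℂ)) *
      star (hA.eigenvectorUnitary : Matrix I I ℂ) := by
  conv_lhs => rw [hA.spectral_theorem, Unitary.conjStarAlgAut_apply]
  rfl

/-- `mpow` may be computed from any unitary diagonalization. -/
lemma mpow_unitary_conj_diagonal {U : Matrix I I ℂ} (hU : U ∈ unitaryGroup I ℂ)
    (d : I → ℝ) (t : ℝ) :
    mpow (U * diagonal (fun i => (d i : ℂ)) * star U) t =
      U * diagonal (fun i => (suppPow t (d i) : ℂ)) * star U := by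
  set A := U * diagonal (fun i => (d i : ℂ)) * star U with hAdef
  have hA : A.IsHermitian := by
    refine isHermitian_mul_mul_conjTranspose U (isHermitian_diagonal_of_self_adjoint _ ?_)
    ext i
    simp
  have hUU : star U * U = 1 := mem_unitaryGroup_iff'.mp hU
  have hUU' : U * star U = 1 := mem_unitaryGroup_iff.mp hU
  rw [mpow_eq hA]
  set V : Matrix I I ℂ := (hA.eigenvectorUnitary : Matrix I I ℂ) with hV
  have hVV : star V * V = 1 := mem_unitaryGroup_iff'.mp hA.eigenvectorUnitary.2
  have hVV' : V * star V = 1 := mem_unitaryGroup_iff.mp hA.eigenvectorUnitary.2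
  have hAV := eq_eigenvectorUnitary_mul_diagonal_mul_star hA
  rw [← hV] at hAV
  have hinter : diagonal (fun i => (hA.eigenvalues i : ℂ)) * (star V * U) =
      (star V * U) * diagonal (fun i => (d i : ℂ)) := by
    calc _ = star V * V * diagonal (fun i => (hA.eigenvalues i : ℂ)) * (star V * U) := by
          rw [hVV, one_mul]
      _ = star V * (V * diagonal (fun i => (hA.eigenvalues i : ℂ)) * star V) * U := by
          simp only [Matrix.mul_assoc]
      _ = star V * A * U := by rw [← hAV]
      _ = star V * U * diagonal (fun i => (d i : ℂ)) * (star U * U) := by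
          rw [hAdef]; simp only [Matrix.mul_assoc]
      _ = _ := by rw [hUU, mul_one]
  have hinter_pow : diagonal (fun i => (suppPow t (hA.eigenvalues i) : ℂ)) * (star V * U) =
      (star V * U) * diagonal (fun i => (suppPow t (d i) : ℂ)) := by
    ext i j
    have hij := congrFun (congrFun hinter i) j
    rw [diagonal_mul, mul_diagonal] at hij ⊢
    by_cases h0 : (star V * U) i j = 0
    · simp [h0]
    · rw [mul_comm] at hij
      have := Complex.ofReal_injective (mul_left_cancel₀ h0 hij)
      rw [this, mul_comm]
  calc V * diagonal (fun i => (suppPow t (hA.eigenvalues i) : ℂ)) * star V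
      = V * (diagonal (fun i => (suppPow t (hA.eigenvalues i) : ℂ)) * (star V * U)) * star U := by
        simp only [Matrix.mul_assoc, hUU', mul_one]
    _ = V * star V * U * diagonal (fun i => (suppPow t (d i) : ℂ)) * star U := by
        rw [hinter_pow]; simp only [Matrix.mul_assoc]
    _ = _ := by rw [hVV', one_mul]

lemma mpow_posSemidef {A : Matrix I I ℂ} (hA : A.PosSemidef) (t : ℝ) :
    (mpow A t).PosSemidef := by
  rw [mpow_eq hA.isHermitian]
  refine PosSemidef.mul_mul_conjTranspose_same (PosSemidef.diagonal fun i => ?_) _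
  exact Complex.zero_le_real.mpr (suppPow_nonneg t (hA.eigenvalues_nonneg i))

lemma continuous_mpow {A : Matrix I I ℂ} (hA : A.IsHermitian) : Continuous (mpow A) := by
  simp_rw [funext (mpow_eq hA)]
  refine (continuous_const.matrix_mul (Continuous.matrix_diagonal ?_)).matrix_mul continuous_const
  exact continuous_pi fun i => Complex.continuous_ofReal.comp (continuous_suppPow _)

lemma mpow_smul {A : Matrix I I ℂ} (hA : A.PosSemidef) {c : ℝ} (hc : 0 < c) (t : ℝ) :
    mpow (c • A) t = c ^ t • mpow A t := by
  have key : c • A = (hA.1.eigenvectorUnitary : Matrix I I ℂ) *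
      diagonal (fun i => ((c * hA.1.eigenvalues i : ℝ) : ℂ)) *
      star (hA.1.eigenvectorUnitary : Matrix I I ℂ) := by
    conv_lhs => rw [eq_eigenvectorUnitary_mul_diagonal_mul_star hA.1]
    rw [← Matrix.smul_mul, ← Matrix.mul_smul, ← diagonal_smul]
    congr 3
    ext i
    simp
  rw [key, mpow_unitary_conj_diagonal hA.1.eigenvectorUnitary.2, mpow_eq hA.1,
    ← Matrix.smul_mul, ← Matrix.mul_smul, ← diagonal_smul]
  congr 3
  ext i
  rw [suppPow_mul t hc.le (hA.eigenvalues_nonneg i),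
    show suppPow t c = c ^ t from if_neg hc.ne']
  simp

lemma mpow_kronecker {A : Matrix I I ℂ} {B : Matrix J J ℂ} (hA : A.PosSemidef)
    (hB : B.PosSemidef) (t : ℝ) : mpow (A ⊗ₖ B) t = mpow A t ⊗ₖ mpow B t := by
  have kron_conj : ∀ (U D : Matrix I I ℂ) (V E : Matrix J J ℂ),
      (U * D * star U) ⊗ₖ (V * E * star V) = (U ⊗ₖ V) * (D ⊗ₖ E) * star (U ⊗ₖ V) := by
    intro U D V E
    rw [mul_kronecker_mul, mul_kronecker_mul]
    simp only [star_eq_conjTranspose, conjTranspose_kronecker]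
  have key : A ⊗ₖ B =
      ((hA.1.eigenvectorUnitary : Matrix I I ℂ) ⊗ₖ (hB.1.eigenvectorUnitary : Matrix J J ℂ)) *
      diagonal (fun p : I × J =>
        ((hA.1.eigenvalues p.1 * hB.1.eigenvalues p.2 : ℝ) : ℂ)) *
      star ((hA.1.eigenvectorUnitary : Matrix I I ℂ) ⊗ₖ
        (hB.1.eigenvectorUnitary : Matrix J J ℂ)) := by
    conv_lhs => rw [eq_eigenvectorUnitary_mul_diagonal_mul_star hA.1,
      eq_eigenvectorUnitary_mul_diagonal_mul_star hB.1, kron_conj, diagonal_kronecker_diagonal]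
    simp only [Complex.ofReal_mul]
  rw [key, mpow_unitary_conj_diagonal
    (kronecker_mem_unitary hA.1.eigenvectorUnitary.2 hB.1.eigenvectorUnitary.2),
    mpow_eq hA.1, mpow_eq hB.1, kron_conj, diagonal_kronecker_diagonal]
  simp only [suppPow_mul t (hA.eigenvalues_nonneg _) (hB.eigenvalues_nonneg _),
    Complex.ofReal_mul]

open scoped MatrixOrder Matrix.Norms.L2Operator in
/-- Operator monotonicity of `A ↦ A ^ t` for `t ∈ (0, 1]`. -/
lemma mpow_sub_mpow_posSemidef {A B : Matrix I I ℂ} (hA : A.PosSemidef)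
    (hAB : (B - A).PosSemidef) {t : ℝ} (ht : t ∈ Set.Ioc (0 : ℝ) 1) :
    (mpow B t - mpow A t).PosSemidef := by
  have mpow_eq_rpow : ∀ {C : Matrix I I ℂ}, C.PosSemidef → mpow C t = C ^ t := by
    intro C hC
    rw [CFC.rpow_eq_cfc_real hC.nonneg, hC.1.cfc_eq, IsHermitian.cfc,
      Unitary.conjStarAlgAut_apply, mpow_eq hC.1]
    simp only [suppPow_of_pos ht.1]
    rfl
  have hB : B.PosSemidef := by simpa using hAB.add hA
  rw [mpow_eq_rpow hA, mpow_eq_rpow hB]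
  exact le_iff.mp (CFC.rpow_le_rpow ⟨ht.1.le, ht.2⟩ (le_iff.mpr hAB))

open scoped MatrixOrder Matrix.Norms.L2Operator in
lemma trace_mul_nonneg {X Y : Matrix I I ℂ} (hX : X.PosSemidef) (hY : Y.PosSemidef) :
    0 ≤ (X * Y).trace := by
  obtain ⟨C, rfl⟩ := CStarAlgebra.nonneg_iff_eq_star_mul_self.mp hY.nonneg
  rw [← Matrix.mul_assoc, trace_mul_comm, ← Matrix.mul_assoc]
  exact (hX.mul_mul_conjTranspose_same C).trace_nonneg

lemma trace_mul_le_trace_mul {X X' Y Y' : Matrix I I ℂ} (hX : (X' - X).PosSemidef)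
    (hX' : X'.PosSemidef) (hY : Y.PosSemidef) (hY' : (Y' - Y).PosSemidef) :
    (X * Y).trace ≤ (X' * Y').trace := by
  have h := add_nonneg (trace_mul_nonneg hX hY) (trace_mul_nonneg hX' hY')
  rw [← trace_add, sub_mul, mul_sub, sub_add_sub_cancel', trace_sub] at h
  exact sub_nonneg.mp h

end Mpow

/-- If `A ≤ β·(A₁ ⊗ A₂)` and `B ≤ β·(B₁ ⊗ B₂)` for positive semidefinite
matrices, then `Tr(A^{1-t} B^t) ≤ β · Tr(A₁^{1-t} B₁^t) · Tr(A₂^{1-t} B₂^t)` for every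
`t ∈ [0,1]`. -/
theorem trace_rpow_mul_rpow_le_of_kron_dominated
    (d₁ d₂ : ℕ)
    (A B : Matrix (Fin d₁ × Fin d₂) (Fin d₁ × Fin d₂) ℂ)
    (hA : A.PosSemidef) (hB : B.PosSemidef)
    (A₁ B₁ : Matrix (Fin d₁) (Fin d₁) ℂ) (hA₁ : A₁.PosSemidef) (hB₁ : B₁.PosSemidef)
    (A₂ B₂ : Matrix (Fin d₂) (Fin d₂) ℂ) (hA₂ : A₂.PosSemidef) (hB₂ : B₂.PosSemidef)
    (β : ℝ) (hβ : 1 ≤ β)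
    (hAdom : (β • (A₁ ⊗ₖ A₂) - A).PosSemidef)
    (hBdom : (β • (B₁ ⊗ₖ B₂) - B).PosSemidef) :
    ∀ t ∈ Set.Icc (0 : ℝ) 1,
      ((mpow A (1 - t) * mpow B t).trace).re ≤
        β * ((mpow A₁ (1 - t) * mpow B₁ t).trace).re *
          ((mpow A₂ (1 - t) * mpow B₂ t).trace).re := by
  have hβ0 : 0 < β := one_pos.trans_le hβ
  have interior : ∀ t ∈ Set.Ioo (0 : ℝ) 1,
      ((mpow A (1 - t) * mpow B t).trace).re ≤
        β * ((mpow A₁ (1 - t) * mpow B₁ t).trace).re *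
          ((mpow A₂ (1 - t) * mpow B₂ t).trace).re := by
    intro t ht
    have hA₁₂ := hA₁.kronecker hA₂
    have hB₁₂ := hB₁.kronecker hB₂
    have hle := trace_mul_le_trace_mul
      (mpow_sub_mpow_posSemidef hA hAdom ⟨sub_pos.mpr ht.2, by linarith [ht.1]⟩)
      (mpow_posSemidef (hA₁₂.smul hβ0.le) _) (mpow_posSemidef hB t)
      (mpow_sub_mpow_posSemidef hB hBdom ⟨ht.1, ht.2.le⟩)
    rw [mpow_smul hA₁₂ hβ0, mpow_smul hB₁₂ hβ0, smul_mul_smul_comm,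
      ← Real.rpow_add hβ0, sub_add_cancel, Real.rpow_one, mpow_kronecker hA₁ hA₂,
      mpow_kronecker hB₁ hB₂, ← mul_kronecker_mul, trace_smul, trace_kronecker] at hle
    have him := (Complex.le_def.mp
      (trace_mul_nonneg (mpow_posSemidef hA₁ (1 - t)) (mpow_posSemidef hB₁ t))).2
    have hre := (Complex.le_def.mp hle).1
    rw [Complex.smul_re, Complex.mul_re, ← him] at hre
    simpa [mul_assoc] using hre
  intro t ht
  rw [← closure_Ioo zero_ne_one] at ht
  have cont : ∀ {d : Type} [Fintype d] [DecidableEq d] {M N : Matrix d d ℂ},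
      M.PosSemidef → N.PosSemidef →
      Continuous fun s : ℝ => ((mpow M (1 - s) * mpow N s).trace).re := fun hM hN =>
    Complex.continuous_re.comp (((continuous_mpow hM.1).comp
      (continuous_const.sub continuous_id)).matrix_mul (continuous_mpow hN.1)).matrix_trace
  exact le_on_closure interior (cont hA hB).continuousOn
    ((continuous_const.mul (cont hA₁ hB₁)).mul (cont hA₂ hB₂)).continuousOn ht
end

section
/- Let X be a finite nonempty set, T : X × X → ℝ a row-stochastic matrix (T_{xy} ≥ 0 and Σ_y T_{xy} = 1 for all x), and r : X → ℝ a strictly positive probability distribution with Σ_x r_x·T_{xy} = r_y for all y. For n ≥ 1 and x ∈ X^n define the Markov weight μ_n(x) := r_{x_1}·∏_{i=1}^{n−1} T_{x_i x_{i+1}}. Then the following are equivalent: (1) there exists α > 0 such that for all m ≥ 1, all k ≥ 1 and all x ∈ X^{km}: μ_{km}(x) ≥ α^{k−1}·∏_{j=0}^{k−1} μ_m(x_{jm+1}, …, x_{(j+1)m}); (2) T_{xy} > 0 for all x, y ∈ X. -/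
theorem blockIdx_lt {j k i m : ℕ} (hj : j < k) (hi : i < m) : j * m + i < k * m :=
  calc j * m + i < j * m + m := by omega
    _ = (j + 1) * m := by ring
    _ ≤ k * m := Nat.mul_le_mul_right m hj

/-- The Markov weight `μ_n(x) = r_{x₁} · ∏_{i=1}^{n-1} T_{x_i x_{i+1}}` of a word
`x ∈ X^n` (with the convention `μ_0 = 1`). -/
def markovWeight {X : Type*} [Fintype X] (r : X → ℝ) (T : X → X → ℝ) :
    (n : ℕ) → (Fin n → X) → ℝ
  | n, x =>
    if h : n = 0 then 1
    else
      r (x ⟨0, Nat.pos_of_ne_zero h⟩) *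
        ∏ i : Fin (n - 1),
          T (x ⟨i.1, by have := i.2; omega⟩) (x ⟨i.1 + 1, by have := i.2; omega⟩)

theorem markovWeight_succ {X : Type*} [Fintype X] (r : X → ℝ) (T : X → X → ℝ) (n : ℕ)
    (y : ℕ → X) :
    markovWeight r T (n + 1) (fun i => y i) =
      r (y 0) * ∏ i ∈ Finset.range n, T (y i) (y (i + 1)) := by
  rw [← Fin.prod_univ_eq_prod_range (fun i => T (y i) (y (i + 1)))]
  simp [markovWeight]

theorem markovWeight_nonneg {X : Type*} [Fintype X] {r : X → ℝ} {T : X → X → ℝ}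
    (hr : ∀ x, 0 ≤ r x) (hT : ∀ x y, 0 ≤ T x y) (n : ℕ) (x : Fin n → X) :
    0 ≤ markovWeight r T n x := by
  simp only [markovWeight]
  split_ifs
  · exact zero_le_one
  · exact mul_nonneg (hr _) (Finset.prod_nonneg fun _ _ => hT _ _)

/-- Concatenating two nonempty words costs at most a factor `α` as soon as `α * r ≤ T`. -/
theorem mul_markovWeight_le_markovWeight_append {X : Type*} [Fintype X] {r : X → ℝ}
    {T : X → X → ℝ} (hr : ∀ x, 0 ≤ r x) (hT : ∀ x y, 0 ≤ T x y) {α : ℝ}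
    (hα : ∀ x y, α * r y ≤ T x y) (a b : ℕ) (y : ℕ → X) :
    α * (markovWeight r T (a + 1) (fun i => y i) *
        markovWeight r T (b + 1) (fun i => y (a + 1 + i))) ≤
      markovWeight r T (a + 1 + (b + 1)) (fun i => y i) := by
  rw [markovWeight_succ r T b (fun i => y (a + 1 + i)), ← add_assoc (a + 1) b 1,
    markovWeight_succ, markovWeight_succ, Finset.prod_range_add, Finset.prod_range_succ]
  set P := ∏ i ∈ Finset.range a, T (y i) (y (i + 1))
  set Q := ∏ i ∈ Finset.range b, T (y (a + 1 + i)) (y (a + 1 + (i + 1)))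
  have hP : 0 ≤ P := Finset.prod_nonneg fun _ _ => hT _ _
  have hQ : 0 ≤ Q := Finset.prod_nonneg fun _ _ => hT _ _
  calc α * (r (y 0) * P * (r (y (a + 1)) * Q))
      = r (y 0) * P * Q * (α * r (y (a + 1))) := by ring
    _ ≤ r (y 0) * P * Q * T (y a) (y (a + 1)) :=
        mul_le_mul_of_nonneg_left (hα _ _) (mul_nonneg (mul_nonneg (hr _) hP) hQ)
    _ = r (y 0) * (P * T (y a) (y (a + 1)) * Q) := by ring

theorem pow_mul_prod_markovWeight_le {X : Type*} [Fintype X] {r : X → ℝ}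
    {T : X → X → ℝ} (hr : ∀ x, 0 ≤ r x) (hT : ∀ x y, 0 ≤ T x y) {α : ℝ} (hα0 : 0 ≤ α)
    (hα : ∀ x y, α * r y ≤ T x y) (p k : ℕ) (y : ℕ → X) :
    α ^ k * ∏ j ∈ Finset.range (k + 1),
        markovWeight r T (p + 1) (fun i => y (j * (p + 1) + i)) ≤
      markovWeight r T ((k + 1) * (p + 1)) (fun i => y i) := by
  induction k with
  | zero =>
    rw [zero_add, one_mul]
    simp
  | succ k ih =>
    rw [Finset.prod_range_succ, pow_succ]
    obtain ⟨a, ha⟩ : ∃ a, (k + 1) * (p + 1) = a + 1 := ⟨k * p + k + p, by ring⟩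
    have hlen : (k + 1 + 1) * (p + 1) = a + 1 + (p + 1) := by rw [add_mul, ha, one_mul]
    have happend := mul_markovWeight_le_markovWeight_append hr hT hα a p y
    rw [hlen]
    rw [ha] at ih ⊢
    refine le_trans ?_ happend
    have hlast := markovWeight_nonneg hr hT (p + 1) (fun i => y (a + 1 + i))
    calc _ = α * (α ^ k * (∏ j ∈ Finset.range (k + 1),
              markovWeight r T (p + 1) (fun i => y (j * (p + 1) + i))) *
            markovWeight r T (p + 1) (fun i => y (a + 1 + i))) := by ring
      _ ≤ _ := by gcongr

/-- A stationary Markov measure satisfies the lower factorization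
property iff the transition matrix has strictly positive entries. -/
theorem markov_lowerFact_iff_pos_transition
    (X : Type*) [Fintype X] [Nonempty X]
    (T : X → X → ℝ) (hT0 : ∀ x y, 0 ≤ T x y) (hT1 : ∀ x, ∑ y, T x y = 1)
    (r : X → ℝ) (hr : ∀ x, 0 < r x) (hrsum : ∑ x, r x = 1)
    (hstat : ∀ y, ∑ x, r x * T x y = r y) :
    (∃ α : ℝ, 0 < α ∧ ∀ (m : ℕ), 1 ≤ m → ∀ (k : ℕ), 1 ≤ k →
        ∀ x : Fin (k * m) → X,
          α ^ (k - 1) *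
              ∏ j : Fin k,
                markovWeight r T m
                  (fun i : Fin m => x ⟨j.1 * m + i.1, blockIdx_lt j.2 i.2⟩)
            ≤ markovWeight r T (k * m) x) ↔
      (∀ x y, 0 < T x y) := by
  constructor
  · rintro ⟨α, hα, h⟩ a b
    have hab := h 1 le_rfl 2 one_le_two ![a, b]
    simp only [Fin.prod_univ_two, markovWeight] at hab
    norm_num at hab
    have hpos : 0 < r a * T a b :=
      (mul_pos hα (mul_pos (hr a) (hr b))).trans_le hab
    exact pos_of_mul_pos_right hpos (hr a).le
  · intro hT
    obtain ⟨p, hp⟩ := Finite.exists_min fun p : X × X => T p.1 p.2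
    have hr1 : ∀ x, r x ≤ 1 := fun x =>
      hrsum ▸ Finset.single_le_sum (fun y _ => (hr y).le) (Finset.mem_univ x)
    refine ⟨T p.1 p.2, hT _ _, fun m hm k hk x => ?_⟩
    obtain ⟨m, rfl⟩ := Nat.exists_eq_add_of_le' hm
    obtain ⟨k, rfl⟩ := Nat.exists_eq_add_of_le' hk
    obtain ⟨y, rfl⟩ : ∃ y : ℕ → X, x = fun i : Fin _ => y i :=
      ⟨fun i => if h : i < (k + 1) * (m + 1) then x ⟨i, h⟩ else Classical.arbitrary X,
        by ext i; simp⟩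
    have hfact := pow_mul_prod_markovWeight_le (fun x => (hr x).le) hT0 (hT p.1 p.2).le
      (fun a b => (mul_le_of_le_one_right (hT0 _ _) (hr1 b)).trans (hp (a, b))) m k y
    rwa [← Fin.prod_univ_eq_prod_range
      (fun j => markovWeight r T (m + 1) (fun i => y (j * (m + 1) + i)))] at hfact
end

section
/- Let X be a finite nonempty set, T : X × X → ℝ a row-stochastic matrix (T_{xy} ≥ 0 and Σ_y T_{xy} = 1 for all x), r : X → ℝ a strictly positive probability distribution with Σ_x r_x·T_{xy} = r_y for all y, and (ϑ̂_{xy})_{x,y∈X} a family of d×d complex density matrices. Then the following are equivalent: (1) there exists α > 0 such that for all x, y ∈ X the matrix T_{xy}·ϑ̂_{xy} − α·Σ_z r_z·T_{zy}·ϑ̂_{zy} is positive semidefinite; (2) T_{xy} > 0 for all x, y ∈ X, and for all x, y, z ∈ X the matrices ϑ̂_{xy} and ϑ̂_{zy} have the same range. -/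
open Matrix
open scoped ComplexOrder

namespace Matrix

variable {n : Type*} [Fintype n]

/-- A square matrix whose kernel contains that of `A` is a left multiple of `A`. -/
lemma exists_eq_mul_of_ker_mulVec_le {K : Type*} [Field K] {A B : Matrix n n K}
    (h : ∀ v, A *ᵥ v = 0 → B *ᵥ v = 0) : ∃ C, B = C * A := by
  classical
  have hk : LinearMap.ker A.mulVecLin ≤ LinearMap.ker B.mulVecLin := fun v hv ↦ by
    simpa using h v (by simpa using hv)
  obtain ⟨g, hg⟩ := ((LinearMap.ker A.mulVecLin).liftQ B.mulVecLin hk ∘ₗ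
    A.mulVecLin.quotKerEquivRange.symm.toLinearMap).exists_extend
  refine ⟨LinearMap.toMatrix' g, ?_⟩
  apply Matrix.toLin'.injective
  ext1 i
  ext1
  simp only [LinearMap.comp_apply, toLin'_mul, toLin'_toMatrix', toLin'_apply]
  have := LinearMap.congr_fun hg ⟨A.mulVecLin (LinearMap.single K (fun _ ↦ K) i 1),
    LinearMap.mem_range_self _ _⟩
  rw [LinearMap.comp_apply, LinearMap.comp_apply, LinearEquiv.coe_coe,
    LinearMap.quotKerEquivRange_symm_apply_image, Submodule.mkQ_apply,
    Submodule.liftQ_apply] at this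
  exact this.symm

/-- Two Hermitian matrices have nested ranges as soon as their kernels are nested. -/
lemma IsHermitian.range_mulVecLin_le_of_ker {A B : Matrix n n ℂ} (hA : A.IsHermitian)
    (hB : B.IsHermitian) (h : ∀ v, A *ᵥ v = 0 → B *ᵥ v = 0) :
    LinearMap.range B.mulVecLin ≤ LinearMap.range A.mulVecLin := by
  obtain ⟨C, hC⟩ := exists_eq_mul_of_ker_mulVec_le h
  have hBA : B = A * Cᴴ := by
    rw [← hB.eq, hC, conjTranspose_mul, hA.eq]
  rintro _ ⟨v, rfl⟩
  exact ⟨Cᴴ *ᵥ v, by simp [hBA]⟩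

/-- Two Hermitian matrices have nested kernels as soon as their ranges are nested. -/
lemma IsHermitian.mulVec_eq_zero_of_range_le {A B : Matrix n n ℂ} (hA : A.IsHermitian)
    (hB : B.IsHermitian)
    (h : LinearMap.range B.mulVecLin ≤ LinearMap.range A.mulVecLin)
    {v : n → ℂ} (hv : A *ᵥ v = 0) : B *ᵥ v = 0 := by
  rw [← dotProduct_star_self_eq_zero]
  obtain ⟨w, hw⟩ := h ⟨B *ᵥ v, rfl⟩
  simp only [mulVecLin_apply] at hw
  rw [star_mulVec, hB.eq, ← dotProduct_mulVec, ← hw, dotProduct_mulVec,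
    ← hA.eq, ← star_mulVec, hv, star_zero, zero_dotProduct]

open scoped MatrixOrder Matrix.Norms.L2Operator in
/-- A Hermitian matrix is dominated by a positive multiple of the identity. -/
lemma IsHermitian.exists_pos_posSemidef_smul_one_sub [DecidableEq n] {M : Matrix n n ℂ}
    (hM : M.IsHermitian) : ∃ c : ℝ, 0 < c ∧ (c • (1 : Matrix n n ℂ) - M).PosSemidef := by
  refine ⟨‖M‖ + 1, by positivity, ?_⟩
  have h : M ≤ algebraMap ℝ _ ‖M‖ := IsSelfAdjoint.le_algebraMap_norm_self hM
  rw [Matrix.le_iff, Algebra.algebraMap_eq_smul_one] at h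
  have heq : (‖M‖ + 1) • (1 : Matrix n n ℂ) - M = (‖M‖ • 1 - M) + 1 := by
    rw [add_smul, one_smul]
    abel
  rw [heq]
  exact h.add PosSemidef.one

open scoped MatrixOrder in
/-- If `ker A ⊆ ker B` for positive semidefinite `A` and `B`, then `A` dominates a positive
multiple of `B`. -/
lemma PosSemidef.exists_pos_posSemidef_sub_smul {A B : Matrix n n ℂ} (hA : A.PosSemidef)
    (hB : B.PosSemidef) (h : ∀ v, A *ᵥ v = 0 → B *ᵥ v = 0) :
    ∃ c : ℝ, 0 < c ∧ (A - c • B).PosSemidef := by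
  classical
  obtain ⟨S, rfl⟩ := CStarAlgebra.nonneg_iff_eq_star_mul_self.mp hA.nonneg
  obtain ⟨R, rfl⟩ := CStarAlgebra.nonneg_iff_eq_star_mul_self.mp hB.nonneg
  simp only [star_eq_conjTranspose, conjTranspose_mul_self_mulVec_eq_zero] at *
  obtain ⟨C, rfl⟩ := exists_eq_mul_of_ker_mulVec_le h
  obtain ⟨c, hc, hcC⟩ :=
    (isHermitian_conjTranspose_mul_self C).exists_pos_posSemidef_smul_one_sub
  refine ⟨c⁻¹, inv_pos.mpr hc, ?_⟩
  convert (hcC.conjTranspose_mul_mul_same S).smul (inv_pos.mpr hc).le using 1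
  simp [Matrix.mul_sub, Matrix.sub_mul, smul_sub, smul_smul, hc.ne', Matrix.mul_assoc]

/-- If `A` dominates a positive multiple of a positive semidefinite `B`,
then `ker A ⊆ ker B`. -/
lemma PosSemidef.mulVec_eq_zero_of_posSemidef_sub_smul {A B : Matrix n n ℂ}
    (hB : B.PosSemidef) {c : ℝ} (hc : 0 < c) (h : (A - c • B).PosSemidef)
    {v : n → ℂ} (hv : A *ᵥ v = 0) : B *ᵥ v = 0 := by
  have h1 := h.dotProduct_mulVec_nonneg v
  have h2 := (hB.smul hc.le).dotProduct_mulVec_nonneg v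
  rw [sub_mulVec, hv, zero_sub, dotProduct_neg, neg_nonneg] at h1
  have h3 := ((hB.smul hc.le).dotProduct_mulVec_zero_iff v).mp (le_antisymm h1 h2)
  rw [smul_mulVec] at h3
  exact (smul_eq_zero.mp h3).resolve_left hc.ne'

end Matrix

/-- For a stationary Markov chain with transition matrix `T`, invariant
distribution `r` and emission states `ϑ_{xy}`, the domination condition
`E* ≥ α·(E* ∘ T*)` (expressed entrywise on minimal projections) holds for some `α > 0`
iff `T > 0` and `range ϑ_{xy} = range ϑ_{zy}` for all `x, y, z`. -/
theorem lowerFact_condition_iff_left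
    (X : Type*) [Fintype X] [Nonempty X] (d : ℕ)
    (T : X → X → ℝ) (hT0 : ∀ x y, 0 ≤ T x y) (hT1 : ∀ x, ∑ y, T x y = 1)
    (r : X → ℝ) (hr : ∀ x, 0 < r x) (hrsum : ∑ x, r x = 1)
    (hstat : ∀ y, ∑ x, r x * T x y = r y)
    (ϑ : X → X → Matrix (Fin d) (Fin d) ℂ)
    (hϑ : ∀ x y, (ϑ x y).PosSemidef ∧ (ϑ x y).trace = 1) :
    (∃ α : ℝ, 0 < α ∧ ∀ x y,
        (T x y • ϑ x y - α • ∑ z, (r z * T z y) • ϑ z y).PosSemidef) ↔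
      ((∀ x y, 0 < T x y) ∧
        ∀ x y z, LinearMap.range (ϑ x y).mulVecLin = LinearMap.range (ϑ z y).mulVecLin) := by
  have hterm : ∀ y z, ((r z * T z y) • ϑ z y).PosSemidef := fun y z ↦
    (hϑ z y).1.smul (mul_nonneg (hr z).le (hT0 z y))
  have hS : ∀ y, (∑ z, (r z * T z y) • ϑ z y).PosSemidef := fun y ↦
    posSemidef_sum _ fun z _ ↦ hterm y z
  constructor
  · rintro ⟨α, hα, h⟩
    have hT : ∀ x y, 0 < T x y := by
      intro x y
      have htr := (h x y).trace_nonneg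
      simp only [trace_sub, trace_smul, trace_sum, (hϑ _ _).2, ← Finset.sum_smul, hstat] at htr
      have hle : (0 : ℝ) ≤ T x y - α * r y := by
        have := (Complex.le_def.mp htr).1
        simpa using this
      linarith [mul_pos hα (hr y)]
    have hker : ∀ x y z v, ϑ x y *ᵥ v = 0 → ϑ z y *ᵥ v = 0 := by
      intro x y z v hv
      have hc : 0 < α * (r z * T z y) := mul_pos hα (mul_pos (hr z) (hT z y))
      refine (hϑ z y).1.mulVec_eq_zero_of_posSemidef_sub_smul (A := T x y • ϑ x y) hc ?_
        (by rw [smul_mulVec, hv, smul_zero])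
      classical
      have hrest : (∑ w ∈ Finset.univ.erase z, (r w * T w y) • ϑ w y).PosSemidef :=
        posSemidef_sum _ fun w _ ↦ hterm y w
      convert (h x y).add (hrest.smul hα.le) using 1
      rw [← Finset.add_sum_erase _ _ (Finset.mem_univ z), smul_add, smul_smul]
      abel
    exact ⟨hT, fun x y z ↦ le_antisymm
      ((hϑ z y).1.1.range_mulVecLin_le_of_ker (hϑ x y).1.1 (hker z y x))
      ((hϑ x y).1.1.range_mulVecLin_le_of_ker (hϑ z y).1.1 (hker x y z))⟩
  · rintro ⟨hT, hrange⟩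
    have hc : ∀ p : X × X, ∃ c : ℝ, 0 < c ∧
        (T p.1 p.2 • ϑ p.1 p.2 - c • ∑ z, (r z * T z p.2) • ϑ z p.2).PosSemidef := by
      rintro ⟨x, y⟩
      refine ((hϑ x y).1.smul (hT0 x y)).exists_pos_posSemidef_sub_smul (hS y) fun v hv ↦ ?_
      rw [smul_mulVec] at hv
      have hv' := (smul_eq_zero.mp hv).resolve_left (hT x y).ne'
      rw [sum_mulVec]
      refine Finset.sum_eq_zero fun z _ ↦ ?_
      rw [smul_mulVec, (hϑ x y).1.1.mulVec_eq_zero_of_range_le (hϑ z y).1.1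
        (hrange z y x).le hv', smul_zero]
    choose c hc0 hc using hc
    obtain ⟨p, hp⟩ := Finite.exists_min c
    refine ⟨c p, hc0 p, fun x y ↦ ?_⟩
    convert (hc (x, y)).add ((hS y).smul (sub_nonneg.mpr (hp (x, y)))) using 1
    rw [sub_smul]
    abel
end

section
/- Let X be a finite nonempty set, T : X × X → ℝ a row-stochastic matrix (T_{xy} ≥ 0 and Σ_y T_{xy} = 1 for all x), r : X → ℝ a strictly positive probability distribution with Σ_x r_x·T_{xy} = r_y for all y, and (ϑ̂_{xy})_{x,y∈X} a family of d×d complex density matrices. Then the following are equivalent: (1) there exists α > 0 such that for all x, y ∈ X the matrix T_{xy}·ϑ̂_{xy} − α·r_y·Σ_w T_{xw}·ϑ̂_{xw} is positive semidefinite; (2) T_{xy} > 0 for all x, y ∈ X, and for all x, y, z ∈ X the matrices ϑ̂_{xy} and ϑ̂_{xz} have the same range. -/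
open Matrix
open scoped ComplexOrder

namespace Matrix

theorem exists_eq_mul_of_range_le {n m k : Type*} [Fintype m] [Fintype k]
    {P : Matrix n m ℂ} {Q : Matrix n k ℂ}
    (h : LinearMap.range Q.mulVecLin ≤ LinearMap.range P.mulVecLin) :
    ∃ D : Matrix m k ℂ, Q = P * D := by
  classical
  have hcol (j : k) : ∃ v, P *ᵥ v = Q.col j := by
    obtain ⟨v, hv⟩ := h ⟨Pi.single j 1, rfl⟩
    exact ⟨v, by simpa using hv⟩
  choose v hv using hcol
  refine ⟨of fun i j => v j i, ?_⟩
  ext i j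
  exact (congrFun (hv j) i).symm

theorem range_mulVecLin_mul_le {n m k : Type*} [Fintype m] [Fintype k]
    (P : Matrix n m ℂ) (D : Matrix m k ℂ) :
    LinearMap.range (P * D).mulVecLin ≤ LinearMap.range P.mulVecLin := by
  rw [mulVecLin_mul]
  exact LinearMap.range_comp_le_range _ _

variable {n : Type*} [Fintype n]

theorem range_mulVecLin_mul_conjTranspose_self {m : Type*} [Fintype m] (P : Matrix n m ℂ) :
    LinearMap.range (P * Pᴴ).mulVecLin = LinearMap.range P.mulVecLin :=
  Submodule.eq_of_le_of_finrank_eq (range_mulVecLin_mul_le P Pᴴ) (rank_self_mul_conjTranspose P)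

theorem IsHermitian.range_le_range_of_ker_le_ker {A B : Matrix n n ℂ} (hA : A.IsHermitian)
    (hB : B.IsHermitian) (h : LinearMap.ker B.mulVecLin ≤ LinearMap.ker A.mulVecLin) :
    LinearMap.range A.mulVecLin ≤ LinearMap.range B.mulVecLin := by
  classical
  obtain ⟨s, hs⟩ := B.mulVecLin.rangeRestrict.exists_rightInverse_of_surjective
    B.mulVecLin.range_rangeRestrict
  obtain ⟨g, hg⟩ := (A.mulVecLin ∘ₗ s).exists_extend
  have hgB : A = LinearMap.toMatrix' g * B := by
    apply mulVec_injective
    funext v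
    have hsv : B *ᵥ (s (B.mulVecLin.rangeRestrict v)) = B *ᵥ v :=
      congrArg Subtype.val (LinearMap.congr_fun hs (B.mulVecLin.rangeRestrict v))
    have hgv : g (B *ᵥ v) = A *ᵥ (s (B.mulVecLin.rangeRestrict v)) :=
      LinearMap.congr_fun hg (B.mulVecLin.rangeRestrict v)
    have hker : s (B.mulVecLin.rangeRestrict v) - v ∈ LinearMap.ker A.mulVecLin :=
      h (by simp [mulVec_sub, hsv])
    rw [← mulVec_mulVec, LinearMap.toMatrix'_mulVec, hgv]
    rw [LinearMap.mem_ker, map_sub, sub_eq_zero] at hker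
    exact hker.symm
  have hA' : A = B * (LinearMap.toMatrix' g)ᴴ := by
    have := congrArg Matrix.conjTranspose hgB
    rwa [conjTranspose_mul, hA.eq, hB.eq] at this
  rw [hA']
  exact range_mulVecLin_mul_le _ _

theorem PosSemidef.ker_le_ker_of_sub_smul {A B : Matrix n n ℂ} (hB : B.PosSemidef)
    {c : ℝ} (hc : 0 < c) (h : (A - c • B).PosSemidef) :
    LinearMap.ker A.mulVecLin ≤ LinearMap.ker B.mulVecLin := by
  intro v hv
  rw [LinearMap.mem_ker, mulVecLin_apply] at hv ⊢
  have h1 := h.dotProduct_mulVec_nonneg v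
  rw [sub_mulVec, hv, smul_mulVec, zero_sub, dotProduct_neg, dotProduct_smul, neg_nonneg] at h1
  refine (hB.dotProduct_mulVec_zero_iff v).1 (le_antisymm ?_ (hB.dotProduct_mulVec_nonneg v))
  exact le_of_smul_le_smul_left (h1.trans_eq (smul_zero c).symm) hc

open scoped MatrixOrder Matrix.Norms.L2Operator in
theorem IsHermitian.exists_pos_one_sub_smul_posSemidef [DecidableEq n] {M : Matrix n n ℂ}
    (hM : M.IsHermitian) : ∃ c : ℝ, 0 < c ∧ (1 - c • M).PosSemidef := by
  have h1 : (‖M‖ • (1 : Matrix n n ℂ) - M).PosSemidef := by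
    have := IsSelfAdjoint.le_algebraMap_norm_self (a := M) hM
    rwa [le_iff, Algebra.algebraMap_eq_smul_one] at this
  have hpos : 0 < ‖M‖ + 1 := by positivity
  refine ⟨(‖M‖ + 1)⁻¹, by positivity, ?_⟩
  have h2 := (h1.add PosSemidef.one).smul (inv_pos.2 hpos).le
  convert h2 using 1
  rw [sub_add_eq_add_sub, smul_sub, show ‖M‖ • (1 : Matrix n n ℂ) + 1 = (‖M‖ + 1) • 1 by module,
    inv_smul_smul₀ hpos.ne']

/-- The Douglas lemma for positive semidefinite matrices. -/
theorem PosSemidef.exists_pos_sub_smul_of_range_le {A B : Matrix n n ℂ} (hA : A.PosSemidef)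
    (hB : B.PosSemidef) (h : LinearMap.range B.mulVecLin ≤ LinearMap.range A.mulVecLin) :
    ∃ c : ℝ, 0 < c ∧ (A - c • B).PosSemidef := by
  classical
  have factor {C : Matrix n n ℂ} (hC : C.PosSemidef) : ∃ P : Matrix n n ℂ, C = P * Pᴴ := by
    open scoped MatrixOrder in
    exact CStarAlgebra.nonneg_iff_eq_mul_star_self.mp hC.nonneg
  obtain ⟨P, rfl⟩ := factor hA
  obtain ⟨Q, rfl⟩ := factor hB
  rw [range_mulVecLin_mul_conjTranspose_self, range_mulVecLin_mul_conjTranspose_self] at h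
  obtain ⟨D, rfl⟩ := exists_eq_mul_of_range_le h
  obtain ⟨c, hc, hcD⟩ := (isHermitian_mul_conjTranspose_self D).exists_pos_one_sub_smul_posSemidef
  refine ⟨c, hc, ?_⟩
  convert hcD.mul_mul_conjTranspose_same P using 1
  simp [mul_sub, sub_mul, mul_assoc]

end Matrix

/-- For a stationary Markov chain with transition matrix `T`, invariant
distribution `r` and emission states `ϑ_{xy}`, the domination condition
`E* ≥ α·((id ⊗ T*) ∘ E*)` (expressed entrywise on minimal projections) holds for some
`α > 0` iff `T > 0` and `range ϑ_{xy} = range ϑ_{xz}` for all `x, y, z`. -/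
theorem lowerFact_condition_iff_right
    (X : Type*) [Fintype X] [Nonempty X] (d : ℕ)
    (T : X → X → ℝ) (hT0 : ∀ x y, 0 ≤ T x y) (hT1 : ∀ x, ∑ y, T x y = 1)
    (r : X → ℝ) (hr : ∀ x, 0 < r x) (hrsum : ∑ x, r x = 1)
    (hstat : ∀ y, ∑ x, r x * T x y = r y)
    (ϑ : X → X → Matrix (Fin d) (Fin d) ℂ)
    (hϑ : ∀ x y, (ϑ x y).PosSemidef ∧ (ϑ x y).trace = 1) :
    (∃ α : ℝ, 0 < α ∧ ∀ x y,
        (T x y • ϑ x y - α • r y • ∑ w, T x w • ϑ x w).PosSemidef) ↔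
      ((∀ x y, 0 < T x y) ∧
        ∀ x y z, LinearMap.range (ϑ x y).mulVecLin = LinearMap.range (ϑ x z).mulVecLin) := by
  have hS (x : X) : (∑ w, T x w • ϑ x w).PosSemidef :=
    posSemidef_sum _ fun w _ => (hϑ x w).1.smul (hT0 x w)
  constructor
  · rintro ⟨α, hα, h⟩
    have hT (x y : X) : 0 < T x y := by
      refine (hT0 x y).lt_of_ne' fun h0 => ?_
      have htr := (h x y).trace_nonneg
      have hsum : ∑ w, (T x w : ℂ) = 1 := by exact_mod_cast hT1 x
      have hval : (T x y • ϑ x y - α • r y • ∑ w, T x w • ϑ x w).trace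
          = ((-(α * r y) : ℝ) : ℂ) := by
        simp [h0, trace_sum, (hϑ _ _).2, hsum]
      rw [hval, Complex.zero_le_real] at htr
      nlinarith [mul_pos hα (hr y)]
    have hker (x y z : X) :
        LinearMap.ker (ϑ x y).mulVecLin ≤ LinearMap.ker (ϑ x z).mulVecLin := by
      classical
      have hrest : (∑ w ∈ Finset.univ.erase z, T x w • ϑ x w).PosSemidef :=
        posSemidef_sum _ fun w _ => (hϑ x w).1.smul (hT0 x w)
      have hdom : (T x y • ϑ x y - (α * r y * T x z) • ϑ x z).PosSemidef := by
        convert (h x y).add (hrest.smul (mul_pos hα (hr y)).le) using 1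
        rw [← Finset.add_sum_erase _ _ (Finset.mem_univ z)]
        module
      refine le_trans ?_ ((hϑ x z).1.ker_le_ker_of_sub_smul
        (mul_pos (mul_pos hα (hr y)) (hT x z)) hdom)
      intro v hv
      rw [LinearMap.mem_ker, mulVecLin_apply] at hv ⊢
      rw [smul_mulVec, hv, smul_zero]
    have hrange (x y z : X) :
        LinearMap.range (ϑ x y).mulVecLin ≤ LinearMap.range (ϑ x z).mulVecLin :=
      (hϑ x y).1.1.range_le_range_of_ker_le_ker (hϑ x z).1.1 (hker x z y)
    exact ⟨hT, fun x y z => (hrange x y z).antisymm (hrange x z y)⟩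
  · rintro ⟨hT, hrange⟩
    have hdom (x y : X) :
        ∃ c : ℝ, 0 < c ∧ (T x y • ϑ x y - c • ∑ w, T x w • ϑ x w).PosSemidef := by
      have hle : LinearMap.range (∑ w, T x w • ϑ x w).mulVecLin
          ≤ LinearMap.range (ϑ x y).mulVecLin := by
        rintro _ ⟨v, rfl⟩
        rw [mulVecLin_apply, sum_mulVec]
        refine Submodule.sum_mem _ fun w _ => ?_
        rw [smul_mulVec, hrange x y w]
        exact Submodule.smul_of_tower_mem _ _ ⟨v, rfl⟩
      obtain ⟨c, hc, hpos⟩ := (hϑ x y).1.exists_pos_sub_smul_of_range_le (hS x) hle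
      refine ⟨T x y * c, mul_pos (hT x y) hc, ?_⟩
      convert hpos.smul (hT0 x y) using 1
      rw [smul_sub, smul_smul]
    choose c hc hpos using hdom
    obtain ⟨p, hp⟩ := Finite.exists_min fun q : X × X => c q.1 q.2 / r q.2
    refine ⟨c p.1 p.2 / r p.2, div_pos (hc _ _) (hr _), fun x y => ?_⟩
    have hle : c p.1 p.2 / r p.2 * r y ≤ c x y := (le_div_iff₀ (hr y)).1 (hp (x, y))
    convert (hpos x y).add ((hS x).smul (sub_nonneg.2 hle)) using 1
    module
end
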